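/- Fix a in R^p, delta > 0, H in N, and a matrix Psi in R^{d x p} with operator norm ||Psi|| <= K. Let Q : R^p -> R be W-Lipschitz with |Q(x)| <= Q_max for all x. Let u be uniformly distributed on the unit sphere S^{p-1} in R^p, and let eta be a zero-mean real random variable independent of u with variance at most sigma^2. Define the one-point gradient estimate g = H * Psi * (p/delta) * (Q(a + delta*u) + eta) * u in R^d. Then E||g - E[g]||^2 <= (2*H^2*p^2*K^2/delta^2) * ( (Q_max + W*delta)^2 + sigma^2 ). -/

import Mathlib

/-! The variance is at most the second moment, `E‖g - E g‖² ≤ E‖g‖²`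
(`integral_norm_sub_integral_sq_le`). On the sphere `‖Ψ u‖ ≤ K`, so almost surely
`‖g‖² ≤ (H p K / δ)² (Q + η)² ≤ 2 (H p K / δ)² (Qmax² + η²)`, and integrating, with
`E η² ≤ σ²` and `Qmax ≤ Qmax + W δ`, gives the bound. -/

open MeasureTheory Metric

/-- The uniform probability measure on the closed Euclidean unit ball in `ℝ^p`. -/
noncomputable def uniformBall (p : ℕ) : Measure (EuclideanSpace ℝ (Fin p)) :=
  (volume (closedBall (0 : EuclideanSpace ℝ (Fin p)) 1))⁻¹ •
    volume.restrict (closedBall (0 : EuclideanSpace ℝ (Fin p)) 1)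

/-- The uniform probability measure on the Euclidean unit sphere in `ℝ^p`
(the normalized surface measure, pushed forward to `ℝ^p`). -/
noncomputable def uniformSphere (p : ℕ) : Measure (EuclideanSpace ℝ (Fin p)) :=
  (((volume : Measure (EuclideanSpace ℝ (Fin p))).toSphere Set.univ)⁻¹ •
    (volume : Measure (EuclideanSpace ℝ (Fin p))).toSphere).map Subtype.val

/-- For `p ≥ 1` the surface measure of the sphere is nonzero and finite, so its normalization is
a genuine probability measure. -/
theorem isProbabilityMeasure_uniformSphere {p : ℕ} (hp : 1 ≤ p) :
    IsProbabilityMeasure (uniformSphere p) := by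
  have : Nonempty (Fin p) := ⟨⟨0, hp⟩⟩
  have h0 : (volume : Measure (EuclideanSpace ℝ (Fin p))).toSphere Set.univ ≠ 0 := by
    rw [Measure.toSphere_apply_univ]
    refine mul_ne_zero ?_ (measure_ball_pos _ _ one_pos).ne'
    simp only [finrank_euclideanSpace, Fintype.card_fin]
    exact_mod_cast (by omega : p ≠ 0)
  constructor
  rw [uniformSphere, Measure.map_apply measurable_subtype_coe MeasurableSet.univ]
  simp only [Set.preimage_univ, Measure.smul_apply, smul_eq_mul]
  exact ENNReal.inv_mul_cancel h0 (measure_ne_top _ _)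

theorem ae_norm_eq_one_uniformSphere (p : ℕ) : ∀ᵐ u ∂(uniformSphere p), ‖u‖ = 1 := by
  rw [uniformSphere, ae_map_iff measurable_subtype_coe.aemeasurable
    (measurableSet_eq_fun measurable_norm measurable_const)]
  exact Filter.Eventually.of_forall fun x => by simp

/-- The variance of a random vector is at most its second moment: expanding the square, the two
differ by `‖E g‖²`. -/
theorem integral_norm_sub_integral_sq_le {Ω E : Type*} [MeasurableSpace Ω]
    [NormedAddCommGroup E] [InnerProductSpace ℝ E] [CompleteSpace E]
    (μ : Measure Ω) [IsProbabilityMeasure μ] {g : Ω → E} (hg : Integrable g μ)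
    (hg2 : Integrable (fun ω => ‖g ω‖ ^ 2) μ) :
    ∫ ω, ‖g ω - ∫ ω', g ω' ∂μ‖ ^ 2 ∂μ ≤ ∫ ω, ‖g ω‖ ^ 2 ∂μ := by
  set m := ∫ ω', g ω' ∂μ with hm
  have hin : Integrable (fun ω => 2 * inner ℝ m (g ω)) μ := (hg.const_inner m).const_mul 2
  have hexp : ∀ ω, ‖g ω - m‖ ^ 2 = ‖g ω‖ ^ 2 - 2 * inner ℝ m (g ω) + ‖m‖ ^ 2 := fun ω => by
    rw [norm_sub_sq_real, real_inner_comm]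
  simp_rw [hexp]
  rw [integral_add (f := fun ω => ‖g ω‖ ^ 2 - 2 * inner ℝ m (g ω))
    (hg2.sub hin) (integrable_const _), integral_sub hg2 hin, integral_const_mul,
    integral_inner hg, ← hm, real_inner_self_eq_norm_sq]
  simp only [integral_const, probReal_univ, one_smul]
  nlinarith [sq_nonneg ‖m‖]

/-- variance bound for the one-point zeroth-order gradient estimate
`g = H · Ψ ((p/δ)(Q(a + δu) + η) u)`, where `u ~ Unif(S^{p-1})` and `η` is an independent
zero-mean noise of variance at most `σ²`. -/
theorem one_point_variance_bound (p d H : ℕ) (hp : 1 ≤ p) (hH : 1 ≤ H)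
    (K W Qmax σ δ : ℝ) (hK : 0 ≤ K) (hW : 0 ≤ W) (hQmax : 0 ≤ Qmax) (hσ : 0 ≤ σ)
    (hδ : 0 < δ)
    (a : EuclideanSpace ℝ (Fin p))
    (Ψ : EuclideanSpace ℝ (Fin p) →L[ℝ] EuclideanSpace ℝ (Fin d)) (hΨ : ‖Ψ‖ ≤ K)
    (Q : EuclideanSpace ℝ (Fin p) → ℝ)
    (hQlip : ∀ x y, |Q x - Q y| ≤ W * ‖x - y‖)
    (hQbdd : ∀ x, |Q x| ≤ Qmax)
    (ν : Measure ℝ) (hν : IsProbabilityMeasure ν)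
    (hint1 : Integrable (fun x : ℝ => x) ν) (hint2 : Integrable (fun x : ℝ => x ^ 2) ν)
    (hmean : ∫ x, x ∂ν = 0) (hvar : ∫ x, x ^ 2 ∂ν ≤ σ ^ 2)
    (g : EuclideanSpace ℝ (Fin p) × ℝ → EuclideanSpace ℝ (Fin d))
    (hg : ∀ ω, g ω = ((H : ℝ) * ((p : ℝ) / δ) * (Q (a + δ • ω.1) + ω.2)) • Ψ ω.1)
    (hgint : Integrable g ((uniformSphere p).prod ν)) :
    ∫ ω, ‖g ω - ∫ ω', g ω' ∂((uniformSphere p).prod ν)‖ ^ 2 ∂((uniformSphere p).prod ν)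
      ≤ (2 * H ^ 2 * p ^ 2 * K ^ 2 / δ ^ 2) * ((Qmax + W * δ) ^ 2 + σ ^ 2) := by
  have := hν
  have := isProbabilityMeasure_uniformSphere hp
  set μ := (uniformSphere p).prod ν with hμ
  set C : ℝ := 2 * H ^ 2 * p ^ 2 * K ^ 2 / δ ^ 2 with hC
  have hC0 : 0 ≤ C := by positivity
  have hbound : ∀ᵐ ω ∂μ, ‖g ω‖ ^ 2 ≤ C * (Qmax ^ 2 + ω.2 ^ 2) := by
    filter_upwards [Measure.quasiMeasurePreserving_fst.ae (ae_norm_eq_one_uniformSphere p)]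
      with ω hω
    have hΨω : ‖Ψ ω.1‖ ≤ K := by
      have := Ψ.le_of_opNorm_le hΨ ω.1
      rwa [hω, mul_one] at this
    have hQ2 : Q (a + δ • ω.1) ^ 2 ≤ Qmax ^ 2 := sq_le_sq' (abs_le.1 (hQbdd _)).1
      (abs_le.1 (hQbdd _)).2
    have hsum : (Q (a + δ • ω.1) + ω.2) ^ 2 ≤ 2 * (Qmax ^ 2 + ω.2 ^ 2) := by
      nlinarith [sq_nonneg (Q (a + δ • ω.1) - ω.2)]
    rw [hg, norm_smul, mul_pow, Real.norm_eq_abs, sq_abs, mul_pow]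
    calc ((H : ℝ) * (p / δ)) ^ 2 * (Q (a + δ • ω.1) + ω.2) ^ 2 * ‖Ψ ω.1‖ ^ 2
        ≤ ((H : ℝ) * (p / δ)) ^ 2 * (2 * (Qmax ^ 2 + ω.2 ^ 2)) * K ^ 2 := by gcongr
      _ = C * (Qmax ^ 2 + ω.2 ^ 2) := by rw [hC]; field_simp
  have hη : Integrable (fun ω : EuclideanSpace ℝ (Fin p) × ℝ => ω.2 ^ 2) μ := hint2.comp_snd _
  have hdom : Integrable (fun ω : EuclideanSpace ℝ (Fin p) × ℝ => C * (Qmax ^ 2 + ω.2 ^ 2)) μ :=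
    ((integrable_const _).add hη).const_mul C
  have hg2 : Integrable (fun ω => ‖g ω‖ ^ 2) μ := by
    refine hdom.mono' (hgint.aestronglyMeasurable.norm.pow 2) ?_
    filter_upwards [hbound] with ω hω
    rwa [Real.norm_of_nonneg (sq_nonneg _)]
  have hηint : ∫ ω, ω.2 ^ 2 ∂μ = ∫ x, x ^ 2 ∂ν := by
    rw [hμ, integral_fun_snd (fun x : ℝ => x ^ 2)]
    simp
  calc ∫ ω, ‖g ω - ∫ ω', g ω' ∂μ‖ ^ 2 ∂μ
      ≤ ∫ ω, ‖g ω‖ ^ 2 ∂μ := integral_norm_sub_integral_sq_le μ hgint hg2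
    _ ≤ ∫ ω, C * (Qmax ^ 2 + ω.2 ^ 2) ∂μ := integral_mono_ae hg2 hdom hbound
    _ = C * (Qmax ^ 2 + ∫ x, x ^ 2 ∂ν) := by
      rw [integral_const_mul, integral_add (integrable_const _) hη, hηint]
      simp
    _ ≤ C * ((Qmax + W * δ) ^ 2 + σ ^ 2) := by
      have : 0 ≤ W * δ := by positivity
      gcongr
      linarith
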